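/- arXiv:2512.09722 — 2 statements merged into one kernel-verified Lean document; each statement's English description precedes it below -/
import Mathlib

section
/- Let k ≥ 2 and 2 ≤ ℓ ≤ k be integers, let u be a real number with |u| < 1/2, and let z > |u|. Then ∫₀^∞ e^{−Lz} · Ĩ_{k,ℓ}(u,L) dL = 2^{1−k} · (z+u)^{1−ℓ} · z^{ℓ−k−1} · Γ(1+2u) · Γ(1−2u), where Γ denotes the Gamma function. -/
open Real MeasureTheory

/-- `I_{k,ℓ}(u,L)`: the integral of `exp(2u(v₁+⋯+v_{ℓ−1}))` over the open simplex
`{v ∈ ℝ^{k−1} : vᵢ > 0, v₁+⋯+v_{k−1} < L/2}` (coordinates are 0-indexed: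
`v i` is `v_{i+1}`). -/
noncomputable def Ikl (k l : ℕ) (u L : ℝ) : ℝ :=
  ∫ v in {v : Fin (k-1) → ℝ | (∀ i, 0 < v i) ∧ ∑ i, v i < L/2},
    Real.exp (2 * u * ∑ i ∈ Finset.univ.filter (fun i : Fin (k-1) => i.val < l - 1), v i)

/-- The `j`-th (1-indexed) coordinate `w_j` for `1 ≤ j ≤ k−1`, with the convention
`w_k = L/2 − (w₁+⋯+w_{k−1})`. -/
noncomputable def wcoord (k : ℕ) (L : ℝ) (w : Fin (k-1) → ℝ) (j : ℕ) : ℝ :=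
  if h : j - 1 < k - 1 then w ⟨j - 1, h⟩ else L/2 - ∑ i, w i

/-- `Ĩ_{k,ℓ}(u,L)`: the integral of
`exp(−2u(w₂+⋯+w_ℓ))·(1−e^{−w_ℓ})^{−2u}·(1−e^{−w₁})^{2u}` over the open simplex
`{w ∈ ℝ^{k−1} : wᵢ > 0, w₁+⋯+w_{k−1} < L/2}`, where `w_k = L/2 − (w₁+⋯+w_{k−1})`. -/
noncomputable def Itkl (k l : ℕ) (u L : ℝ) : ℝ :=
  ∫ w in {w : Fin (k-1) → ℝ | (∀ i, 0 < w i) ∧ ∑ i, w i < L/2},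
    Real.exp (-(2*u) * ∑ j ∈ Finset.Icc 2 l, wcoord k L w j)
      * (1 - Real.exp (-(wcoord k L w l))) ^ (-(2*u))
      * (1 - Real.exp (-(wcoord k L w 1))) ^ (2*u)

/-!
In the variables `w₁, …, w_k` on the simplex `w₁ + ⋯ + w_k = L / 2`, the integrand of `Ĩ_{k,ℓ}` is a
product of functions of the single `w_j`. So `Ĩ_{k,ℓ}` is an iterated convolution evaluated at
`L / 2`, and its Laplace transform at `z` is twice the product of the Laplace transforms of the
factors at `2 z`. The substitution `x = e^{-w}` turns each of these into a Beta integral: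
`w₁` contributes `B(2z, 1 + 2u)`, `w_ℓ` contributes `B(2z + 2u, 1 - 2u)`, and the other variables
contribute `1 / (2z + 2u)` (for `j < ℓ`) or `1 / 2z` (for `ℓ < j`). In the product of the two
nontrivial Beta values the factors `Γ(2z)` and `Γ(2z + 2u)` cancel.
-/

section Convolution

variable {α G ι 𝕜 : Type*} [MeasurableSpace α] [MeasurableSpace G] [RCLike 𝕜]

lemma integral_integral_mul_comp_sub [AddGroup G] [MeasurableAdd G] [MeasurableSub₂ G]
    {μ : Measure α} [SFinite μ] {ν : Measure G} [SFinite ν] [ν.IsAddRightInvariant]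
    {f : α → 𝕜} {g : G → 𝕜} {s : α → G} (hf : Integrable f μ) (hg : Integrable g ν)
    (hs : Measurable s) :
    ∫ t, ∫ x, f x * g (t - s x) ∂μ ∂ν = (∫ x, f x ∂μ) * ∫ y, g y ∂ν := by
  have shear : MeasurePreserving (fun p : α × G ↦ (p.1, p.2 - s p.1)) (μ.prod ν) (μ.prod ν) :=
    (MeasurePreserving.id μ).skew_product (g := fun x t ↦ t - s x)
      (measurable_snd.sub (hs.comp measurable_fst))
      (.of_forall fun x ↦ map_sub_right_eq_self ν (s x))
  have integrable_sheared : Integrable (fun p : α × G ↦ f p.1 * g (p.2 - s p.1)) (μ.prod ν) :=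
    shear.integrable_comp_of_integrable (hf.mul_prod hg)
  calc ∫ t, ∫ x, f x * g (t - s x) ∂μ ∂ν
      = ∫ x, ∫ t, f x * g (t - s x) ∂ν ∂μ := (integral_integral_swap integrable_sheared).symm
    _ = ∫ x, f x * ∫ y, g y ∂ν ∂μ := by simp_rw [integral_const_mul, integral_sub_right_eq_self]
    _ = (∫ x, f x ∂μ) * ∫ y, g y ∂ν := integral_mul_const _ _

lemma integral_integral_prod_mul_comp_sub_sum [AddCommGroup G] [MeasurableAdd₂ G]
    [MeasurableSub₂ G] [Fintype ι] {ν : Measure G} [SigmaFinite ν] [ν.IsAddRightInvariant]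
    {f : ι → G → 𝕜} {g : G → 𝕜} (hf : ∀ i, Integrable (f i) ν) (hg : Integrable g ν) :
    ∫ t, ∫ w : ι → G, (∏ i, f i (w i)) * g (t - ∑ i, w i) ∂(Measure.pi fun _ ↦ ν) ∂ν
      = (∏ i, ∫ x, f i x ∂ν) * ∫ x, g x ∂ν := by
  rw [integral_integral_mul_comp_sub (Integrable.fintype_prod hf) hg
    (by fun_prop : Measurable fun w : ι → G ↦ ∑ i, w i), integral_fintype_prod_eq_prod]

end Convolution

section Simplex

variable {n : ℕ} {t : ℝ} {w : Fin n → ℝ}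

/-- The open corner simplex `{w ∈ ℝⁿ : wᵢ > 0, w₁ + ⋯ + wₙ < t}`, the domain of integration of
`Itkl` for `t = L / 2`. -/
def openCornerSimplex (n : ℕ) (t : ℝ) : Set (Fin n → ℝ) :=
  {w | (∀ i, 0 < w i) ∧ ∑ i, w i < t}

/-- The coordinates `w₁, …, wₙ` of a point of the corner simplex of size `t`, completed by
`t - (w₁ + ⋯ + wₙ)` so that the `n + 1` of them sum to `t`. -/
noncomputable def cornerCoord (t : ℝ) (w : Fin n → ℝ) : Fin (n + 1) → ℝ :=
  Fin.snoc w (t - ∑ i, w i)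

@[simp]
lemma cornerCoord_castSucc (i : Fin n) : cornerCoord t w i.castSucc = w i :=
  Fin.snoc_castSucc ..

@[simp]
lemma cornerCoord_last : cornerCoord t w (Fin.last n) = t - ∑ i, w i :=
  Fin.snoc_last ..

lemma sum_cornerCoord : ∑ j, cornerCoord t w j = t := by
  simp [Fin.sum_univ_castSucc]

lemma mem_openCornerSimplex_iff : w ∈ openCornerSimplex n t ↔ ∀ j, 0 < cornerCoord t w j := by
  simp [openCornerSimplex, Fin.forall_fin_succ']

lemma measurableSet_openCornerSimplex : MeasurableSet (openCornerSimplex n t) := by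
  unfold openCornerSimplex
  measurability

lemma openCornerSimplex_eq_empty (ht : t ≤ 0) : openCornerSimplex n t = ∅ :=
  Set.eq_empty_of_forall_notMem fun _ ⟨w_pos, sum_lt⟩ ↦
    (sum_lt.trans_le ht).not_ge (Finset.sum_nonneg fun i _ ↦ (w_pos i).le)

lemma indicator_openCornerSimplex_prod {M : Type*} [CommMonoidWithZero M]
    (f : Fin (n + 1) → ℝ → M) :
    (openCornerSimplex n t).indicator (fun w ↦ ∏ j, f j (cornerCoord t w j)) w
      = ∏ j, (Set.Ioi 0).indicator (f j) (cornerCoord t w j) := by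
  by_cases hw : w ∈ openCornerSimplex n t
  · rw [Set.indicator_of_mem hw]
    exact Finset.prod_congr rfl fun j _ ↦
      (Set.indicator_of_mem (mem_openCornerSimplex_iff.1 hw j) _).symm
  · obtain ⟨j, hj⟩ := not_forall.1 (mt mem_openCornerSimplex_iff.2 hw)
    rw [Set.indicator_of_notMem hw,
      Finset.prod_eq_zero (Finset.mem_univ j) (Set.indicator_of_notMem hj _)]

lemma integral_Ioi_setIntegral_openCornerSimplex_prod {𝕜 : Type*} [RCLike 𝕜]
    {f : Fin (n + 1) → ℝ → 𝕜} (hf : ∀ j, IntegrableOn (f j) (Set.Ioi 0)) :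
    ∫ t in Set.Ioi 0, ∫ w in openCornerSimplex n t, ∏ j, f j (cornerCoord t w j)
      = ∏ j, ∫ x in Set.Ioi 0, f j x := by
  have inner_eq_zero (t : ℝ) (ht : t ∉ Set.Ioi 0) :
      ∫ w in openCornerSimplex n t, ∏ j, f j (cornerCoord t w j) = 0 := by
    rw [openCornerSimplex_eq_empty (not_lt.1 ht), setIntegral_empty]
  have indicator_integrable (j) : Integrable ((Set.Ioi 0).indicator (f j)) :=
    (integrable_indicator_iff measurableSet_Ioi).2 (hf j)
  rw [setIntegral_eq_integral_of_forall_compl_eq_zero inner_eq_zero]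
  simp_rw [← integral_indicator measurableSet_openCornerSimplex, indicator_openCornerSimplex_prod,
    ← integral_indicator measurableSet_Ioi, Fin.prod_univ_castSucc, cornerCoord_castSucc,
    cornerCoord_last]
  exact integral_integral_prod_mul_comp_sub_sum (fun i ↦ indicator_integrable i.castSucc)
    (indicator_integrable (Fin.last n))

lemma integral_exp_neg_mul_setIntegral_openCornerSimplex_prod {f : Fin (n + 1) → ℝ → ℝ} {s : ℝ}
    (hf : ∀ j, IntegrableOn (fun x ↦ exp (-(s * x)) * f j x) (Set.Ioi 0)) :
    ∫ t in Set.Ioi 0, exp (-(s * t)) *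
        ∫ w in openCornerSimplex n t, ∏ j, f j (cornerCoord t w j)
      = ∏ j, ∫ x in Set.Ioi 0, exp (-(s * x)) * f j x := by
  have exp_eq_prod (t : ℝ) (w : Fin n → ℝ) :
      exp (-(s * t)) = ∏ j, exp (-(s * cornerCoord t w j)) := by
    rw [← exp_sum, Finset.sum_neg_distrib, ← Finset.mul_sum, sum_cornerCoord]
  rw [← integral_Ioi_setIntegral_openCornerSimplex_prod hf]
  simp_rw [← integral_const_mul, Finset.prod_mul_distrib, ← exp_eq_prod]

end Simplex

section Beta

open ProbabilityTheory (beta beta_pos beta_eq_betaIntegralReal)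

variable {a b : ℝ}

lemma integral_Ioo_rpow_mul_one_sub_rpow (ha : 0 < a) (hb : 0 < b) :
    ∫ x in Set.Ioo (0 : ℝ) 1, x ^ (a - 1) * (1 - x) ^ (b - 1) = beta a b := by
  have convergent := Complex.betaIntegral_convergent (u := a) (v := b) (by simpa) (by simpa)
  rw [intervalIntegrable_iff_integrableOn_Ioc_of_le zero_le_one] at convergent
  rw [beta_eq_betaIntegralReal a b ha hb, Complex.betaIntegral,
    intervalIntegral.integral_of_le zero_le_one, ← integral_Ioc_eq_integral_Ioo,
    ← RCLike.re_to_complex, ← integral_re convergent]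
  refine setIntegral_congr_fun measurableSet_Ioc fun x ⟨x_pos, x_le_one⟩ ↦ ?_
  norm_cast
  rw [← Complex.ofReal_cpow x_pos.le, ← Complex.ofReal_cpow (sub_nonneg.2 x_le_one),
    RCLike.re_to_complex, Complex.re_mul_ofReal, Complex.ofReal_re]

lemma image_exp_neg_Ioi_zero : (fun x : ℝ ↦ exp (-x)) '' Set.Ioi 0 = Set.Ioo 0 1 := by
  ext y
  constructor
  · rintro ⟨x, x_pos, rfl⟩
    exact ⟨exp_pos _, exp_lt_one_iff.2 (neg_lt_zero.2 x_pos)⟩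
  · rintro ⟨y_pos, y_lt_one⟩
    exact ⟨-log y, neg_pos.2 (log_neg y_pos y_lt_one), by simp [exp_log y_pos]⟩

/-- The integrand `e^{-ax} (1 - e^{-x})^{b-1}` of the Beta integral `B(a, b)` on `(0, ∞)`, obtained
from the usual one on `(0, 1)` by the substitution `x ↦ e^{-x}`. -/
noncomputable def expBetaKernel (a b x : ℝ) : ℝ :=
  exp (-(a * x)) * (1 - exp (-x)) ^ (b - 1)

lemma exp_neg_mul_expBetaKernel (s a b x : ℝ) :
    exp (-(s * x)) * expBetaKernel a b x = expBetaKernel (s + a) b x := by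
  rw [expBetaKernel, expBetaKernel, ← mul_assoc, ← exp_add]
  ring_nf

lemma integral_expBetaKernel (ha : 0 < a) (hb : 0 < b) :
    ∫ x in Set.Ioi 0, expBetaKernel a b x = beta a b := by
  have hasDerivWithinAt_exp_neg (x : ℝ) (_ : x ∈ Set.Ioi 0) :
      HasDerivWithinAt (fun x ↦ exp (-x)) (-exp (-x)) (Set.Ioi 0) x := by
    simpa using (hasDerivAt_neg x).exp.hasDerivWithinAt
  have injOn_exp_neg : Set.InjOn (fun x : ℝ ↦ exp (-x)) (Set.Ioi 0) :=
    (exp_injective.comp neg_injective).injOn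
  rw [← integral_Ioo_rpow_mul_one_sub_rpow ha hb, ← image_exp_neg_Ioi_zero,
    integral_image_eq_integral_abs_deriv_smul measurableSet_Ioi hasDerivWithinAt_exp_neg
      injOn_exp_neg]
  refine setIntegral_congr_fun measurableSet_Ioi fun x _ ↦ ?_
  simp only [expBetaKernel, abs_neg, abs_exp, smul_eq_mul]
  rw [← exp_mul, ← mul_assoc, ← exp_add]
  ring_nf

lemma integrableOn_expBetaKernel (ha : 0 < a) (hb : 0 < b) :
    IntegrableOn (expBetaKernel a b) (Set.Ioi 0) :=
  .of_integral_ne_zero ((integral_expBetaKernel ha hb).trans_ne (beta_pos ha hb).ne')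

lemma integral_exp_neg_mul_setIntegral_openCornerSimplex_prod_expBetaKernel {n : ℕ} {s : ℝ}
    {a b : Fin (n + 1) → ℝ} (ha : ∀ j, 0 < s + a j) (hb : ∀ j, 0 < b j) :
    ∫ t in Set.Ioi 0, exp (-(s * t)) *
        ∫ w in openCornerSimplex n t, ∏ j, expBetaKernel (a j) (b j) (cornerCoord t w j)
      = ∏ j, beta (s + a j) (b j) := by
  rw [integral_exp_neg_mul_setIntegral_openCornerSimplex_prod]
  · simp_rw [exp_neg_mul_expBetaKernel, integral_expBetaKernel (ha _) (hb _)]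
  · simp_rw [exp_neg_mul_expBetaKernel]
    exact fun j ↦ integrableOn_expBetaKernel (ha j) (hb j)

lemma beta_one_right (ha : 0 < a) : beta a 1 = a⁻¹ := by
  have Gamma_ne_zero := (Gamma_pos_of_pos ha).ne'
  rw [beta, Gamma_add_one ha.ne', Gamma_one]
  field_simp

lemma beta_one_add_mul_beta_add_one_sub {c : ℝ} (ha : 0 < a) (hac : 0 < a + c) :
    beta a (1 + c) * beta (a + c) (1 - c)
      = a⁻¹ * (a + c)⁻¹ * (Gamma (1 + c) * Gamma (1 - c)) := by
  have Gamma_a_ne_zero := (Gamma_pos_of_pos ha).ne'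
  have Gamma_ac_ne_zero := (Gamma_pos_of_pos hac).ne'
  rw [beta, beta, show a + (1 + c) = a + c + 1 by ring, show a + c + (1 - c) = a + 1 by ring,
    Gamma_add_one ha.ne', Gamma_add_one hac.ne']
  field_simp

end Beta

section Itkl

open ProbabilityTheory (beta)

/-- The `a`-parameter of the `expBetaKernel` in which the variable `w_j` (with the 1-indexed `j` of
`wcoord`) enters the integrand of `Itkl k l u`. -/
noncomputable def itklRate (l : ℕ) (u : ℝ) (j : ℕ) : ℝ :=
  if j ∈ Finset.Icc 2 l then 2 * u else 0

/-- The `b`-parameter of the `expBetaKernel` in which the variable `w_j` (with the 1-indexed `j` of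
`wcoord`) enters the integrand of `Itkl k l u`. -/
noncomputable def itklShape (l : ℕ) (u : ℝ) (j : ℕ) : ℝ :=
  if j = 1 then 1 + 2 * u else if j = l then 1 - 2 * u else 1

variable {k l n : ℕ} {u z : ℝ}

lemma add_itklRate_pos (hz : 0 < z) (hzu : 0 < z + u) (j : ℕ) : 0 < 2 * z + itklRate l u j := by
  unfold itklRate
  split_ifs <;> linarith

lemma itklShape_pos (hu : |u| < 1 / 2) (j : ℕ) : 0 < itklShape l u j := by
  have := abs_lt.1 hu
  unfold itklShape
  split_ifs <;> linarith

lemma wcoord_succ (t : ℝ) (w : Fin n → ℝ) (j : Fin (n + 1)) :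
    wcoord (n + 1) (2 * t) w (j + 1) = cornerCoord t w j := by
  cases j using Fin.lastCases <;> simp [wcoord]

lemma prod_exp_itklRate (hlk : l ≤ k) (x : ℕ → ℝ) :
    ∏ j ∈ Finset.Icc 1 k, exp (-(itklRate l u j * x j))
      = exp (-(2 * u) * ∑ j ∈ Finset.Icc 2 l, x j) := by
  have Icc_inter : Finset.Icc 1 k ∩ Finset.Icc 2 l = Finset.Icc 2 l :=
    Finset.inter_eq_right.2 (Finset.Icc_subset_Icc one_le_two hlk)
  simp_rw [← exp_sum, Finset.sum_neg_distrib, itklRate, ite_mul, zero_mul, Finset.sum_ite_mem,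
    Icc_inter, ← Finset.mul_sum, neg_mul]

lemma prod_rpow_itklShape (hl2 : 2 ≤ l) (hlk : l ≤ k) (y : ℕ → ℝ) :
    ∏ j ∈ Finset.Icc 1 k, y j ^ (itklShape l u j - 1)
      = y l ^ (-(2 * u)) * y 1 ^ (2 * u) := by
  have factor_eq (j : ℕ) : y j ^ (itklShape l u j - 1)
      = (if j = l then y j ^ (-(2 * u)) else 1) * if j = 1 then y j ^ (2 * u) else 1 := by
    unfold itklShape
    split_ifs <;> first | omega | simp
  have l_mem : l ∈ Finset.Icc 1 k := Finset.mem_Icc.2 ⟨by omega, hlk⟩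
  have one_mem : 1 ∈ Finset.Icc 1 k := Finset.mem_Icc.2 ⟨le_rfl, by omega⟩
  simp_rw [factor_eq, Finset.prod_mul_distrib, Finset.prod_ite_eq', if_pos l_mem, if_pos one_mem]

lemma Itkl_two_mul (hl2 : 2 ≤ l) (hln : l ≤ n + 1) (t : ℝ) :
    Itkl (n + 1) l u (2 * t) = ∫ w in openCornerSimplex n t, ∏ j : Fin (n + 1),
      expBetaKernel (itklRate l u (j + 1)) (itklShape l u (j + 1)) (cornerCoord t w j) := by
  unfold Itkl
  rw [mul_div_cancel_left₀ t two_ne_zero]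
  refine integral_congr_ae (.of_forall fun w ↦ ?_)
  let x := wcoord (n + 1) (2 * t) w
  let kernel (j : ℕ) : ℝ := expBetaKernel (itklRate l u j) (itklShape l u j) (x j)
  calc exp (-(2 * u) * ∑ j ∈ Finset.Icc 2 l, x j) * (1 - exp (-x l)) ^ (-(2 * u))
        * (1 - exp (-x 1)) ^ (2 * u)
      = ∏ j ∈ Finset.Icc 1 (n + 1), kernel j := by
        simp_rw [kernel, expBetaKernel, Finset.prod_mul_distrib, prod_exp_itklRate hln,
          prod_rpow_itklShape hl2 hln (fun j ↦ 1 - exp (-x j)), mul_assoc]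
    _ = ∏ j ∈ Finset.range (n + 1), kernel (j + 1) := by
        rw [Finset.range_eq_Ico, Finset.prod_Ico_add', zero_add, Finset.Ico_add_one_right_eq_Icc]
    _ = ∏ j : Fin (n + 1), kernel (j + 1) := Finset.prod_range _
    _ = _ := by simp only [kernel, x, wcoord_succ]

lemma integral_exp_neg_mul_Itkl (hl2 : 2 ≤ l) (hln : l ≤ n + 1) (hu : |u| < 1 / 2) (hz : 0 < z)
    (hzu : 0 < z + u) :
    ∫ L in Set.Ioi 0, exp (-(L * z)) * Itkl (n + 1) l u L
      = 2 * ∏ j ∈ Finset.range (n + 1),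
          beta (2 * z + itklRate l u (j + 1)) (itklShape l u (j + 1)) := by
  calc ∫ L in Set.Ioi 0, exp (-(L * z)) * Itkl (n + 1) l u L
      = 2 * ∫ t in Set.Ioi 0, exp (-(2 * t * z)) * Itkl (n + 1) l u (2 * t) := by
        rw [← smul_eq_mul, integral_comp_mul_left_Ioi'
          (fun L ↦ exp (-(L * z)) * Itkl (n + 1) l u L) 0 two_pos, mul_zero]
    _ = 2 * ∏ j : Fin (n + 1), beta (2 * z + itklRate l u (j + 1)) (itklShape l u (j + 1)) := by
        simp_rw [Itkl_two_mul hl2 hln, mul_right_comm 2 _ z]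
        rw [integral_exp_neg_mul_setIntegral_openCornerSimplex_prod_expBetaKernel
          (fun j ↦ add_itklRate_pos hz hzu (j + 1)) (fun j ↦ itklShape_pos hu (j + 1))]
    _ = _ := by rw [Finset.prod_range]

lemma prod_beta_itkl (p r : ℕ) (hz : 0 < z) (hzu : 0 < z + u) :
    ∏ j ∈ Finset.range (p + 2 + r),
        beta (2 * z + itklRate (p + 2) u (j + 1)) (itklShape (p + 2) u (j + 1))
      = (2 * (z + u))⁻¹ ^ (p + 1) * (2 * z)⁻¹ ^ (r + 1)
        * (Gamma (1 + 2 * u) * Gamma (1 - 2 * u)) := by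
  have beta_first : beta (2 * z + itklRate (p + 2) u 1) (itklShape (p + 2) u 1)
      = beta (2 * z) (1 + 2 * u) := by
    simp [itklRate, itklShape]
  have beta_between (j : ℕ) (hj : j ∈ Finset.range p) :
      beta (2 * z + itklRate (p + 2) u (j + 2)) (itklShape (p + 2) u (j + 2))
        = (2 * (z + u))⁻¹ := by
    have j_lt := Finset.mem_range.1 hj
    rw [← beta_one_right (by linarith)]
    simp [itklRate, itklShape, j_lt.le, j_lt.ne, mul_add]
  have beta_l : beta (2 * z + itklRate (p + 2) u (p + 2)) (itklShape (p + 2) u (p + 2))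
      = beta (2 * z + 2 * u) (1 - 2 * u) := by
    simp [itklRate, itklShape]
  have beta_beyond (j : ℕ) :
      beta (2 * z + itklRate (p + 2) u (p + 2 + j + 1)) (itklShape (p + 2) u (p + 2 + j + 1))
        = (2 * z)⁻¹ := by
    rw [← beta_one_right (by linarith)]
    simp [itklRate, itklShape, add_assoc, show p + (2 + (j + 1)) ≠ 1 by omega]
  calc _ = (2 * (z + u))⁻¹ ^ p * beta (2 * z) (1 + 2 * u) * beta (2 * z + 2 * u) (1 - 2 * u)
        * (2 * z)⁻¹ ^ r := by
        rw [Finset.prod_range_add, Finset.prod_range_succ, Finset.prod_range_succ',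
          Finset.prod_congr rfl beta_between, Finset.prod_congr rfl fun j _ ↦ beta_beyond j,
          beta_first, beta_l, Finset.prod_const, Finset.prod_const, Finset.card_range,
          Finset.card_range]
    _ = (2 * (z + u))⁻¹ ^ p * (2 * z)⁻¹ ^ r
        * (beta (2 * z) (1 + 2 * u) * beta (2 * z + 2 * u) (1 - 2 * u)) := by ring
    _ = _ := by
        rw [beta_one_add_mul_beta_add_one_sub (by linarith) (by linarith), ← mul_add]
        ring

end Itkl

theorem stmt_5_general (k l : ℕ) (hl2 : 2 ≤ l) (hlk : l ≤ k)
    (u z : ℝ) (hu : |u| < 1 / 2) (hz : 0 < z) (hzu : 0 < z + u) :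
    ∫ L in Set.Ioi (0 : ℝ), exp (-(L * z)) * Itkl k l u L
      = (2 : ℝ) ^ (1 - (k : ℤ)) * (z + u) ^ (1 - (l : ℤ)) * z ^ ((l : ℤ) - k - 1)
        * Gamma (1 + 2 * u) * Gamma (1 - 2 * u) := by
  obtain ⟨n, rfl⟩ : ∃ n, k = n + 1 := Nat.exists_eq_add_of_le' (by omega)
  rw [integral_exp_neg_mul_Itkl hl2 hlk hu hz hzu]
  obtain ⟨p, rfl⟩ := Nat.exists_eq_add_of_le' hl2
  obtain ⟨r, hr⟩ := Nat.exists_eq_add_of_le hlk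
  have exponent_two : 1 - ((p + 2 + r : ℕ) : ℤ) = -((p + r + 1 : ℕ) : ℤ) := by push_cast; ring
  have exponent_add : 1 - ((p + 2 : ℕ) : ℤ) = -((p + 1 : ℕ) : ℤ) := by push_cast; ring
  have exponent_z : ((p + 2 : ℕ) : ℤ) - ((p + 2 + r : ℕ) : ℤ) - 1 = -((r + 1 : ℕ) : ℤ) := by
    push_cast; ring
  rw [hr, prod_beta_itkl p r hz hzu, exponent_two, exponent_add, exponent_z]
  simp only [zpow_neg, zpow_natCast, inv_pow, mul_pow]
  field_simp
  ring

/-- **Laplace transform of `Ĩ_{k,ℓ}` (proof of Proposition 5.2).** For `2 ≤ ℓ ≤ k`,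
`|u| < 1/2` and `z > |u|`,
`∫₀^∞ e^{−Lz} Ĩ_{k,ℓ}(u,L) dL = 2^{1−k}(z+u)^{1−ℓ} z^{ℓ−k−1} Γ(1+2u)Γ(1−2u)`. -/
theorem stmt_5 (k l : ℕ) (hk : 2 ≤ k) (hl2 : 2 ≤ l) (hlk : l ≤ k)
    (u z : ℝ) (hu : |u| < 1/2) (hz : |u| < z) :
    ∫ L in Set.Ioi (0:ℝ), Real.exp (-(L*z)) * Itkl k l u L
      = (2:ℝ)^(1 - (k:ℤ)) * (z + u)^(1 - (l:ℤ)) * z^((l:ℤ) - k - 1)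
        * Real.Gamma (1 + 2*u) * Real.Gamma (1 - 2*u) := by
  exact stmt_5_general k l hl2 hlk u z hu ((abs_nonneg u).trans_lt hz)
    (by linarith [neg_abs_le u])
end

section
/- Let k ≥ 2 and 2 ≤ ℓ ≤ k be integers, let u be a real number with 0 < |u| < 1/2, and let L ≥ 0. Then Ĩ_{k,ℓ}(u,L) = (2πu / sin(2πu)) · I_{k,ℓ}(−u, L). -/
open Real MeasureTheory

/-!
Integrating a product of functions of `w₁, …, w_k` over the simplex `w₁ + ⋯ + w_k = L/2` gives the
convolution of these functions, each cut off to the positive half-line. The factors in the two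
integrals differ only in the coordinates `1` and `ℓ`, so, convolution being commutative and
associative, everything reduces to two factors: with `a = 2u`,
`(1 - e⁻ˣ)ᵃ ⋆ (1 - e⁻ˣ)⁻ᵃ e⁻ᵃˣ = Γ(1 + a) Γ(1 - a) · (e⁻ᵃˣ ⋆ 1)`.
The left side at `x` is `∫₀ˣ ((eʷ - 1) / (eˣ - eʷ))ᵃ dw`. The substitution
`t = (eʷ - 1) / (eˣ - eʷ)` turns it into
`∫₀^∞ tᵃ (eˣ / (1 + t eˣ) - 1 / (1 + t)) dt = ∫₀^∞ ∫₀ˣ tᵃ eˢ / (1 + t eˢ)² ds dt`,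
and the `t`-integral is the Beta integral `e⁻ᵃˢ Γ(1 + a) Γ(1 - a)`.
-/

open scoped ENNReal

open Set ProbabilityTheory

section SMul

variable {G : Type*} [Add G] [Neg G] [MeasurableSpace G] {μ : Measure G} {c : ℝ≥0∞}

theorem smul_lconvolution (hc : c ≠ ⊤) (f g : G → ℝ≥0∞) :
    (c • f) ⋆ₗ[μ] g = c • (f ⋆ₗ[μ] g) := by
  ext x
  simp only [lconvolution_def, Pi.smul_apply, smul_eq_mul, mul_assoc,
    lintegral_const_mul' _ _ hc]

theorem lconvolution_smul (hc : c ≠ ⊤) (f g : G → ℝ≥0∞) :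
    f ⋆ₗ[μ] (c • g) = c • (f ⋆ₗ[μ] g) := by
  ext x
  simp only [lconvolution_def, Pi.smul_apply, smul_eq_mul, mul_left_comm _ c,
    lintegral_const_mul' _ _ hc]

end SMul

section IteratedLConvolution

/-- The iterated convolution `F 0 ⋆ (F 1 ⋆ (⋯ ⋆ F n))` of the `n + 1` functions `F 0, …, F n`. -/
noncomputable def iteratedLConvolution {G : Type*} [Add G] [Neg G] [MeasurableSpace G]
    (μ : Measure G) : (ℕ → G → ℝ≥0∞) → ℕ → G → ℝ≥0∞
  | F, 0 => F 0
  | F, n + 1 => F 0 ⋆ₗ[μ] iteratedLConvolution μ (fun i => F (i + 1)) n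

variable {G : Type*} [AddCommGroup G] [MeasurableSpace G] [MeasurableAdd₂ G] [MeasurableNeg G]
  {μ : Measure G}

theorem lconvolution_left_comm [μ.IsAddLeftInvariant] [μ.IsNegInvariant] [SFinite μ]
    {f g h : G → ℝ≥0∞} (hf : Measurable f) (hg : Measurable g) (hh : Measurable h) :
    f ⋆ₗ[μ] (g ⋆ₗ[μ] h) = g ⋆ₗ[μ] (f ⋆ₗ[μ] h) := by
  rw [lconvolution_assoc hf hg hh, lconvolution_assoc hg hf hh, lconvolution_comm (f := f)]

theorem measurable_iteratedLConvolution [SFinite μ] {F : ℕ → G → ℝ≥0∞}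
    (hF : ∀ i, Measurable (F i)) (n : ℕ) : Measurable (iteratedLConvolution μ F n) := by
  induction n generalizing F with
  | zero => exact hF 0
  | succ n ih => exact measurable_lconvolution μ (hF 0) (ih fun i => hF (i + 1))

theorem lconvolution_iteratedLConvolution_eq_smul [μ.IsAddLeftInvariant] [μ.IsNegInvariant]
    [SFinite μ] {f g : G → ℝ≥0∞} {F H : ℕ → G → ℝ≥0∞} {c : ℝ≥0∞} (hc : c ≠ ⊤)
    (hf : Measurable f) (hg : Measurable g) (hF : ∀ i, Measurable (F i))
    (hH : ∀ i, Measurable (H i)) {p n : ℕ} (hpn : p ≤ n) (hFH : ∀ i ≠ p, F i = H i)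
    (hconv : f ⋆ₗ[μ] F p = c • (g ⋆ₗ[μ] H p)) :
    f ⋆ₗ[μ] iteratedLConvolution μ F n = c • (g ⋆ₗ[μ] iteratedLConvolution μ H n) := by
  induction p generalizing F H n with
  | zero =>
    cases n with
    | zero => exact hconv
    | succ n =>
      have htail : (fun i => F (i + 1)) = fun i => H (i + 1) :=
        funext fun i => hFH (i + 1) i.succ_ne_zero
      have hmeas := measurable_iteratedLConvolution (μ := μ) (fun i => hH (i + 1)) n
      rw [iteratedLConvolution, iteratedLConvolution, htail, lconvolution_assoc hf (hF 0) hmeas,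
        hconv, smul_lconvolution hc, ← lconvolution_assoc hg (hH 0) hmeas]
  | succ p ih =>
    obtain ⟨n, rfl⟩ : ∃ m, n = m + 1 := Nat.exists_eq_add_of_le' (by omega)
    have htail := ih (F := fun i => F (i + 1)) (H := fun i => H (i + 1)) (n := n)
      (fun i => hF (i + 1)) (fun i => hH (i + 1)) (by omega)
      (fun i hi => hFH (i + 1) (by omega)) hconv
    rw [iteratedLConvolution, iteratedLConvolution, hFH 0 (by omega),
      lconvolution_left_comm hf (hH 0) (measurable_iteratedLConvolution (fun i => hF (i + 1)) n),
      htail, lconvolution_smul hc,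
      lconvolution_left_comm hg (hH 0) (measurable_iteratedLConvolution (fun i => hH (i + 1)) n)]

theorem lintegral_pi_eq_iteratedLConvolution [SigmaFinite μ] {F : ℕ → G → ℝ≥0∞}
    (hF : ∀ i, Measurable (F i)) (n : ℕ) (x : G) :
    ∫⁻ w : Fin n → G, (∏ i : Fin n, F i (w i)) * F n (x - ∑ i, w i) ∂Measure.pi (fun _ => μ)
      = iteratedLConvolution μ F n x := by
  induction n generalizing F x with
  | zero => simp [iteratedLConvolution]
  | succ n ih =>
    have hmeas (y : G) : Measurable fun w : Fin n → G =>
        (∏ i : Fin n, F (i + 1) (w i)) * F (n + 1) (-y + x - ∑ i, w i) := by fun_prop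
    calc
      _ = ∫⁻ q : G × (Fin n → G), F 0 q.1 *
            ((∏ i : Fin n, F (i + 1) (q.2 i)) * F (n + 1) (-q.1 + x - ∑ i, q.2 i))
            ∂μ.prod (Measure.pi fun _ => μ) := by
        rw [← (measurePreserving_piFinSuccAbove (fun _ : Fin (n + 1) => μ) 0).lintegral_comp_emb
          (MeasurableEquiv.measurableEmbedding _)]
        refine lintegral_congr fun w => ?_
        simp only [Fin.prod_univ_succ, Fin.sum_univ_succ, Fin.val_zero, Fin.val_succ, mul_assoc,
          MeasurableEquiv.piFinSuccAbove_apply, Fin.insertNthEquiv_zero, Fin.consEquiv_symm_apply,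
          Fin.tail_def]
        congr 3
        abel
      _ = ∫⁻ y, F 0 y * iteratedLConvolution μ (fun i => F (i + 1)) n (-y + x) ∂μ := by
        rw [lintegral_prod _ (by fun_prop)]
        refine lintegral_congr fun y => ?_
        rw [← ih fun i => hF (i + 1)]
        exact lintegral_const_mul (F 0 y) (hmeas y)

end IteratedLConvolution

section HalfLine

/-- The `ℝ≥0∞`-valued density on `ℝ` which is `φ` on the positive half-line and vanishes
elsewhere. Simplex integrals of products become iterated convolutions of such densities. -/
noncomputable def halfLineDensity (φ : ℝ → ℝ) : ℝ → ℝ≥0∞ :=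
  (Ioi 0).indicator fun x => ENNReal.ofReal (φ x)

variable {φ : ℝ → ℝ}

theorem measurable_halfLineDensity (hφ : Measurable φ) : Measurable (halfLineDensity φ) :=
  hφ.ennreal_ofReal.indicator measurableSet_Ioi

theorem halfLineDensity_of_pos {x : ℝ} (hx : 0 < x) :
    halfLineDensity φ x = ENNReal.ofReal (φ x) :=
  indicator_of_mem hx _

theorem halfLineDensity_of_nonpos {x : ℝ} (hx : x ≤ 0) : halfLineDensity φ x = 0 :=
  indicator_of_notMem hx.not_gt _

theorem lconvolution_halfLineDensity (φ ψ : ℝ → ℝ) (x : ℝ) :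
    (halfLineDensity φ ⋆ₗ halfLineDensity ψ) x
      = ∫⁻ y in Ioo 0 x, ENNReal.ofReal (φ y) * ENNReal.ofReal (ψ (x - y)) := by
  rw [lconvolution_def, ← lintegral_indicator measurableSet_Ioo]
  refine lintegral_congr fun y => ?_
  rw [neg_add_eq_sub]
  rcases le_or_gt y 0 with hy | hy
  · rw [halfLineDensity_of_nonpos hy, zero_mul, indicator_of_notMem fun h => hy.not_gt h.1]
  rcases le_or_gt x y with hxy | hxy
  · rw [halfLineDensity_of_nonpos (sub_nonpos.2 hxy), mul_zero,
      indicator_of_notMem fun h => hxy.not_gt h.2]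
  · rw [halfLineDensity_of_pos hy, halfLineDensity_of_pos (sub_pos.2 hxy),
      indicator_of_mem (mem_Ioo.2 ⟨hy, hxy⟩)]

/-- The open simplex of points of `ℝⁿ` with positive coordinates summing to less than `x`. -/
def openSimplex (n : ℕ) (x : ℝ) : Set (Fin n → ℝ) :=
  {w | (∀ i, 0 < w i) ∧ ∑ i, w i < x}

theorem measurableSet_openSimplex (n : ℕ) (x : ℝ) : MeasurableSet (openSimplex n x) := by
  unfold openSimplex
  measurability

theorem indicator_openSimplex_ofReal_prod_mul {φ : ℕ → ℝ → ℝ}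
    (hφ : ∀ i x, 0 < x → 0 ≤ φ i x) (n : ℕ) (x : ℝ) (w : Fin n → ℝ) :
    (openSimplex n x).indicator
        (fun w => ENNReal.ofReal ((∏ i : Fin n, φ i (w i)) * φ n (x - ∑ i, w i))) w
      = (∏ i : Fin n, halfLineDensity (φ i) (w i)) * halfLineDensity (φ n) (x - ∑ i, w i) := by
  by_cases hw : w ∈ openSimplex n x
  · have hprod : ∏ i : Fin n, halfLineDensity (φ i) (w i)
        = ENNReal.ofReal (∏ i : Fin n, φ i (w i)) := by
      rw [ENNReal.ofReal_prod_of_nonneg fun i _ => hφ _ _ (hw.1 i)]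
      exact Finset.prod_congr rfl fun i _ => halfLineDensity_of_pos (hw.1 i)
    rw [indicator_of_mem hw, hprod, halfLineDensity_of_pos (sub_pos.2 hw.2),
      ENNReal.ofReal_mul (Finset.prod_nonneg fun i _ => hφ _ _ (hw.1 i))]
  · rw [indicator_of_notMem hw, eq_comm, mul_eq_zero]
    rcases not_and_or.1 hw with hcoord | hsum
    · obtain ⟨i, hi⟩ := not_forall.1 hcoord
      exact .inl (Finset.prod_eq_zero (Finset.mem_univ i)
        (halfLineDensity_of_nonpos (not_lt.1 hi)))
    · exact .inr (halfLineDensity_of_nonpos (sub_nonpos.2 (not_lt.1 hsum)))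

theorem setIntegral_openSimplex_prod_mul {φ : ℕ → ℝ → ℝ} (hmeas : ∀ i, Measurable (φ i))
    (hφ : ∀ i x, 0 < x → 0 ≤ φ i x) (n : ℕ) (x : ℝ) :
    ∫ w in openSimplex n x, (∏ i : Fin n, φ i (w i)) * φ n (x - ∑ i, w i)
      = (iteratedLConvolution volume (fun i => halfLineDensity (φ i)) n x).toReal := by
  have hnonneg : ∀ w ∈ openSimplex n x,
      0 ≤ (∏ i : Fin n, φ i (w i)) * φ n (x - ∑ i, w i) :=
    fun w hw => mul_nonneg (Finset.prod_nonneg fun i _ => hφ _ _ (hw.1 i))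
      (hφ _ _ (sub_pos.2 hw.2))
  rw [integral_eq_lintegral_of_nonneg_ae
      (ae_restrict_of_forall_mem (measurableSet_openSimplex n x) hnonneg)
      (by fun_prop), ← lintegral_indicator (measurableSet_openSimplex n x)]
  simp_rw [indicator_openSimplex_ofReal_prod_mul hφ]
  rw [volume_pi, lintegral_pi_eq_iteratedLConvolution
    fun i => measurable_halfLineDensity (hmeas i)]

end HalfLine

section Beta

variable {α β c : ℝ}

theorem setLIntegral_rpow_mul_one_sub_rpow (hα : 0 < α) (hβ : 0 < β) :
    ∫⁻ y in Ioo (0 : ℝ) 1, ENNReal.ofReal (y ^ (α - 1) * (1 - y) ^ (β - 1))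
      = ENNReal.ofReal (beta α β) := by
  have hpos := beta_pos hα hβ
  have htotal := lintegral_betaPDF_eq_one hα hβ
  simp_rw [lintegral_betaPDF, mul_assoc, ENNReal.ofReal_mul (one_div_pos.2 hpos).le] at htotal
  rw [lintegral_const_mul' _ _ ENNReal.ofReal_ne_top, one_div, ENNReal.ofReal_inv_of_pos hpos]
    at htotal
  rw [ENNReal.eq_inv_of_mul_eq_one_left ((mul_comm _ _).trans htotal), inv_inv]

theorem bijOn_mul_div_one_add_mul (hc : 0 < c) :
    BijOn (fun t => t * c / (1 + t * c)) (Ioi 0) (Ioo 0 1) := by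
  refine InvOn.bijOn (f' := fun y => y / ((1 - y) * c)) ⟨?_, ?_⟩ ?_ ?_
  · intro t (ht : 0 < t)
    have hsub : 1 - t * c / (1 + t * c) = 1 / (1 + t * c) := by field_simp; ring
    simp only [hsub]
    field_simp
  · rintro y ⟨-, hy⟩
    have hsub : 1 - y ≠ 0 := (sub_pos.2 hy).ne'
    have hadd : 1 + y / ((1 - y) * c) * c = 1 / (1 - y) := by field_simp; ring
    simp only [hadd]
    field_simp
  · intro t (ht : 0 < t)
    have hden : 0 < 1 + t * c := by positivity
    exact ⟨by positivity, (div_lt_one hden).2 (by linarith)⟩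
  · rintro y ⟨hy₀, hy₁⟩
    exact div_pos hy₀ (mul_pos (sub_pos.2 hy₁) hc)

theorem setLIntegral_rpow_div_one_add_mul_rpow (hα : 0 < α) (hβ : 0 < β) (hc : 0 < c) :
    ∫⁻ t in Ioi (0 : ℝ), ENNReal.ofReal (c ^ α * t ^ (α - 1) / (1 + t * c) ^ (α + β))
      = ENNReal.ofReal (beta α β) := by
  have hbij := bijOn_mul_div_one_add_mul hc
  have hderiv : ∀ t ∈ Ioi (0 : ℝ), HasDerivWithinAt (fun t => t * c / (1 + t * c))
      (c / (1 + t * c) ^ 2) (Ioi 0) t := by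
    intro t (ht : 0 < t)
    have hlin : HasDerivAt (fun t => t * c) c t := by simpa using (hasDerivAt_id t).mul_const c
    refine ((hlin.fun_div (hlin.const_add 1) (by positivity)).congr_deriv ?_).hasDerivWithinAt
    ring
  rw [← setLIntegral_rpow_mul_one_sub_rpow hα hβ, ← hbij.image_eq,
    lintegral_image_eq_lintegral_abs_deriv_mul measurableSet_Ioi hderiv hbij.injOn]
  refine setLIntegral_congr_fun measurableSet_Ioi fun t (ht : 0 < t) => ?_
  have hden : 0 < 1 + t * c := by positivity
  have hsub : 1 - t * c / (1 + t * c) = 1 / (1 + t * c) := by field_simp; ring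
  simp only [hsub]
  rw [← ENNReal.ofReal_mul (abs_nonneg _), abs_of_pos (by positivity),
    div_rpow (by positivity) hden.le, div_rpow zero_le_one hden.le, one_rpow,
    mul_rpow ht.le hc.le, rpow_sub_one hc.ne', rpow_sub_one hden.ne', rpow_sub_one hden.ne',
    rpow_add hden]
  congr 1
  field_simp

end Beta

section ExpSubstitution

theorem leftInvOn_exp_sub_one_div_sub_exp {c : ℝ} (hc : 1 < c) :
    LeftInvOn (fun w => (exp w - 1) / (c - exp w)) (fun t => log ((1 + t * c) / (1 + t)))
      (Ioi 0) := by
  intro t (ht : 0 < t)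
  have hc₁ : c - 1 ≠ 0 := (sub_pos.2 hc).ne'
  have hnum : (1 + t * c) / (1 + t) - 1 = t * (c - 1) / (1 + t) := by field_simp; ring
  have hden : c - (1 + t * c) / (1 + t) = (c - 1) / (1 + t) := by field_simp; ring
  simp only [exp_log (show 0 < (1 + t * c) / (1 + t) by positivity), hnum, hden]
  field_simp

theorem bijOn_log_one_add_mul_div_one_add {c : ℝ} (hc : 1 < c) :
    BijOn (fun t => log ((1 + t * c) / (1 + t))) (Ioi 0) (Ioo 0 (log c)) := by
  have hc₀ : 0 < c := one_pos.trans hc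
  have hc₁ : c - 1 ≠ 0 := (sub_pos.2 hc).ne'
  refine InvOn.bijOn (f' := fun w => (exp w - 1) / (c - exp w))
    ⟨leftInvOn_exp_sub_one_div_sub_exp hc, ?_⟩ ?_ ?_
  · rintro w ⟨-, hw⟩
    have hsub : c - exp w ≠ 0 := (sub_pos.2 ((lt_log_iff_exp_lt hc₀).1 hw)).ne'
    have hnum : 1 + (exp w - 1) / (c - exp w) * c = exp w * (c - 1) / (c - exp w) := by
      field_simp; ring
    have hden : 1 + (exp w - 1) / (c - exp w) = (c - 1) / (c - exp w) := by
      field_simp; ring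
    simp only [hnum, hden]
    rw [div_div_div_cancel_right₀ hsub, mul_div_cancel_right₀ _ hc₁, log_exp]
  · intro t (ht : 0 < t)
    have hpos : 0 < 1 + t := by positivity
    refine ⟨log_pos ((one_lt_div hpos).2 ?_), log_lt_log (by positivity) ((div_lt_iff₀ hpos).2 ?_)⟩
    · nlinarith
    · nlinarith
  · rintro w ⟨hw₀, hw⟩
    exact div_pos (sub_pos.2 (one_lt_exp_iff.2 hw₀)) (sub_pos.2 ((lt_log_iff_exp_lt hc₀).1 hw))

theorem setLIntegral_comp_exp_sub_one_div {x : ℝ} (hx : 0 < x) (φ : ℝ → ℝ≥0∞) :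
    ∫⁻ w in Ioo 0 x, φ ((exp w - 1) / (exp x - exp w))
      = ∫⁻ t in Ioi 0, ENNReal.ofReal (exp x / (1 + t * exp x) - 1 / (1 + t)) * φ t := by
  have hc : 1 < exp x := one_lt_exp_iff.2 hx
  have hbij := bijOn_log_one_add_mul_div_one_add hc
  have hderiv : ∀ t ∈ Ioi (0 : ℝ), HasDerivWithinAt (fun t => log ((1 + t * exp x) / (1 + t)))
      (exp x / (1 + t * exp x) - 1 / (1 + t)) (Ioi 0) t := by
    intro t (ht : 0 < t)
    have hnum : HasDerivAt (fun t => 1 + t * exp x) (exp x) t := by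
      simpa using ((hasDerivAt_id t).mul_const (exp x)).const_add 1
    have hden : HasDerivAt (fun t : ℝ => 1 + t) 1 t := (hasDerivAt_id t).const_add 1
    refine (((hnum.fun_div hden (by positivity)).log (by positivity)).congr_deriv
      ?_).hasDerivWithinAt
    field_simp
  have hderiv_nonneg : ∀ t ∈ Ioi (0 : ℝ), 0 ≤ exp x / (1 + t * exp x) - 1 / (1 + t) := by
    intro t (ht : 0 < t)
    rw [sub_nonneg, div_le_div_iff₀ (by positivity) (by positivity)]
    linarith
  have himage : Ioo 0 x = (fun t => log ((1 + t * exp x) / (1 + t))) '' Ioi 0 := by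
    rw [hbij.image_eq, log_exp]
  rw [himage, lintegral_image_eq_lintegral_abs_deriv_mul measurableSet_Ioi hderiv hbij.injOn]
  refine setLIntegral_congr_fun measurableSet_Ioi fun t ht => ?_
  simp only [abs_of_nonneg (hderiv_nonneg t ht), (leftInvOn_exp_sub_one_div_sub_exp hc).eq ht]

theorem setLIntegral_Ioo_exp_div_one_add_mul_exp_sq {t x : ℝ} (ht : 0 < t) (hx : 0 ≤ x) :
    ∫⁻ s in Ioo 0 x, ENNReal.ofReal (exp s / (1 + t * exp s) ^ 2)
      = ENNReal.ofReal (exp x / (1 + t * exp x) - 1 / (1 + t)) := by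
  have hderiv (s : ℝ) : HasDerivAt (fun s => exp s / (1 + t * exp s))
      (exp s / (1 + t * exp s) ^ 2) s := by
    refine ((hasDerivAt_exp s).fun_div (((hasDerivAt_exp s).const_mul t).const_add 1)
      (by positivity)).congr_deriv ?_
    ring
  have hcont : Continuous fun s => exp s / (1 + t * exp s) ^ 2 := by
    refine continuous_exp.div (by fun_prop) fun s => ?_
    positivity
  rw [← ofReal_integral_eq_lintegral_ofReal (hcont.integrableOn_Ioc.mono_set Ioo_subset_Ioc_self)
      (.of_forall fun s => by positivity), ← integral_Ioc_eq_integral_Ioo,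
    ← intervalIntegral.integral_of_le hx, intervalIntegral.integral_eq_sub_of_hasDerivAt
      (fun s _ => hderiv s) (hcont.intervalIntegrable 0 x)]
  simp

end ExpSubstitution

section Reflection

theorem setLIntegral_Ioi_exp_div_one_add_mul_exp_sq_mul_rpow {a : ℝ} (ha : |a| < 1) (s : ℝ) :
    ∫⁻ t in Ioi 0, ENNReal.ofReal (exp s / (1 + t * exp s) ^ 2) * ENNReal.ofReal (t ^ a)
      = ENNReal.ofReal (Gamma (1 + a) * Gamma (1 - a)) * ENNReal.ofReal (exp (-a * s)) := by
  obtain ⟨ha₁, ha₂⟩ := abs_lt.1 ha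
  have hbeta : beta (1 + a) (1 - a) = Gamma (1 + a) * Gamma (1 - a) := by
    rw [beta, show 1 + a + (1 - a) = 2 by ring, Gamma_two, div_one]
  rw [← hbeta, ← setLIntegral_rpow_div_one_add_mul_rpow (by linarith) (by linarith) (exp_pos s),
    ← lintegral_mul_const' _ _ ENNReal.ofReal_ne_top]
  refine setLIntegral_congr_fun measurableSet_Ioi fun t (ht : 0 < t) => ?_
  have hexp : exp s ^ (1 + a) * exp (-a * s) = exp s := by
    rw [← exp_mul, ← exp_add]
    ring_nf
  rw [← ENNReal.ofReal_mul (by positivity), ← ENNReal.ofReal_mul (by positivity),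
    show 1 + a + (1 - a) = 2 by ring, add_sub_cancel_left, rpow_two, mul_div_assoc, mul_right_comm,
    hexp]
  congr 1
  ring

theorem setLIntegral_exp_sub_one_div_rpow {a x : ℝ} (ha : |a| < 1) (hx : 0 < x) :
    ∫⁻ w in Ioo 0 x, ENNReal.ofReal (((exp w - 1) / (exp x - exp w)) ^ a)
      = ENNReal.ofReal (Gamma (1 + a) * Gamma (1 - a)) *
          ∫⁻ s in Ioo 0 x, ENNReal.ofReal (exp (-a * s)) := by
  calc
    _ = ∫⁻ t in Ioi 0, ENNReal.ofReal (exp x / (1 + t * exp x) - 1 / (1 + t)) *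
          ENNReal.ofReal (t ^ a) :=
      setLIntegral_comp_exp_sub_one_div hx fun t => ENNReal.ofReal (t ^ a)
    _ = ∫⁻ t in Ioi 0, ∫⁻ s in Ioo 0 x,
          ENNReal.ofReal (exp s / (1 + t * exp s) ^ 2) * ENNReal.ofReal (t ^ a) := by
      refine setLIntegral_congr_fun measurableSet_Ioi fun t ht => ?_
      rw [lintegral_mul_const' _ _ ENNReal.ofReal_ne_top,
        setLIntegral_Ioo_exp_div_one_add_mul_exp_sq ht hx.le]
    _ = ∫⁻ s in Ioo 0 x, ∫⁻ t in Ioi 0,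
          ENNReal.ofReal (exp s / (1 + t * exp s) ^ 2) * ENNReal.ofReal (t ^ a) :=
      lintegral_lintegral_swap (by fun_prop)
    _ = _ := by
      simp_rw [setLIntegral_Ioi_exp_div_one_add_mul_exp_sq_mul_rpow ha]
      exact lintegral_const_mul' _ _ ENNReal.ofReal_ne_top

/-- The kernel `x ↦ (1 - e⁻ˣ)ˢ e⁻ᶜˣ`. Both integrands of the reflection relation are products of
such kernels, one in each of the coordinates `w₁, …, w_k`. -/
noncomputable def expKernel (s c x : ℝ) : ℝ :=
  (1 - exp (-x)) ^ s * exp (-c * x)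

theorem measurable_expKernel (s c : ℝ) : Measurable (expKernel s c) := by
  unfold expKernel
  fun_prop

theorem expKernel_nonneg (s c : ℝ) {x : ℝ} (hx : 0 < x) : 0 ≤ expKernel s c x :=
  mul_nonneg (rpow_nonneg (sub_nonneg.2 (exp_le_one_iff.2 (neg_nonpos.2 hx.le))) s) (exp_pos _).le

theorem expKernel_zero_left (c x : ℝ) : expKernel 0 c x = exp (-c * x) := by
  simp [expKernel]

theorem expKernel_mul_expKernel_neg (a : ℝ) {x w : ℝ} (hw : w ∈ Ioo 0 x) :
    expKernel a 0 w * expKernel (-a) a (x - w) = ((exp w - 1) / (exp x - exp w)) ^ a := by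
  have hw₀ : 0 < 1 - exp (-w) := by simpa using hw.1
  have hwx : 0 < 1 - exp (-(x - w)) := by simpa using hw.2
  have hexp : exp (-a * (x - w)) = exp (x - w) ^ (-a) := by rw [← exp_mul]; ring_nf
  have hratio : (exp w - 1) / (exp x - exp w)
      = (1 - exp (-w)) / ((1 - exp (-(x - w))) * exp (x - w)) := by
    have hw_num : 1 - exp (-w) = (exp w - 1) / exp w := by
      rw [exp_neg]; field_simp
    have hw_den : (1 - exp (-(x - w))) * exp (x - w) = (exp x - exp w) / exp w := by
      rw [exp_neg, exp_sub]; field_simp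
    rw [hw_num, hw_den, div_div_div_cancel_right₀ (exp_ne_zero w)]
  rw [hratio, div_rpow hw₀.le (by positivity), expKernel, expKernel, hexp,
    ← mul_rpow hwx.le (exp_pos _).le, rpow_neg (by positivity)]
  simp [div_eq_mul_inv]

theorem lconvolution_expKernel_reflection {a : ℝ} (ha : |a| < 1) :
    halfLineDensity (expKernel a 0) ⋆ₗ halfLineDensity (expKernel (-a) a)
      = ENNReal.ofReal (Gamma (1 + a) * Gamma (1 - a)) •
          (halfLineDensity (expKernel 0 a) ⋆ₗ halfLineDensity (expKernel 0 0)) := by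
  ext x
  simp only [Pi.smul_apply, smul_eq_mul, lconvolution_halfLineDensity]
  rcases le_or_gt x 0 with hx | hx
  · simp [Ioo_eq_empty hx.not_gt]
  have hright : ∫⁻ y in Ioo 0 x, ENNReal.ofReal (expKernel 0 a y) *
      ENNReal.ofReal (expKernel 0 0 (x - y)) = ∫⁻ y in Ioo 0 x, ENNReal.ofReal (exp (-a * y)) := by
    simp [expKernel_zero_left]
  rw [hright, ← setLIntegral_exp_sub_one_div_rpow ha hx]
  refine setLIntegral_congr_fun measurableSet_Ioo fun y hy => ?_
  rw [← expKernel_mul_expKernel_neg a hy, ENNReal.ofReal_mul (expKernel_nonneg a 0 hy.1)]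

end Reflection

section SimplexIntegrals

/-- The kernel of the `i`-th coordinate (counted from `0`) in the integrand of
`Ikl k l (-a / 2) L`. -/
noncomputable def iklKernel (a : ℝ) (l i : ℕ) : ℝ → ℝ :=
  expKernel 0 (if i < l - 1 then a else 0)

/-- The kernel of the `i`-th coordinate (counted from `0`, with `w_k` the last one) in the
integrand of `Itkl k l (a / 2) L`. -/
noncomputable def itklKernel (a : ℝ) (l i : ℕ) : ℝ → ℝ :=
  expKernel (if i = 0 then a else if i = l - 1 then -a else 0) (if i ∈ Finset.Ico 1 l then a else 0)

theorem iteratedLConvolution_itklKernel {a : ℝ} (ha : |a| < 1) {l n : ℕ} (hl : 2 ≤ l)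
    (hln : l ≤ n + 1) :
    iteratedLConvolution volume (fun i => halfLineDensity (itklKernel a l i)) n
      = ENNReal.ofReal (Gamma (1 + a) * Gamma (1 - a)) •
          iteratedLConvolution volume (fun i => halfLineDensity (iklKernel a l i)) n := by
  obtain ⟨p, rfl⟩ : ∃ p, l = p + 2 := Nat.exists_eq_add_of_le' hl
  obtain ⟨n, rfl⟩ : ∃ m, n = m + 1 := Nat.exists_eq_add_of_le' (by omega)
  have hmeas (s c : ℝ) : Measurable (halfLineDensity (expKernel s c)) :=
    measurable_halfLineDensity (measurable_expKernel s c)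
  refine lconvolution_iteratedLConvolution_eq_smul (p := p) ENNReal.ofReal_ne_top (hmeas _ _)
    (hmeas _ _) (fun _ => hmeas _ _) (fun _ => hmeas _ _) (by omega) (fun i hi => ?_) ?_
  · have hrate : i < p + 1 ↔ i < p := by omega
    simp [hi, hrate]
  · simpa [itklKernel, iklKernel] using lconvolution_expKernel_reflection ha

theorem Ikl_eq_toReal_iteratedLConvolution {n l : ℕ} (hln : l ≤ n + 1) (u L : ℝ) :
    Ikl (n + 1) l (-u) L
      = (iteratedLConvolution volume (fun i => halfLineDensity (iklKernel (2 * u) l i)) n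
          (L / 2)).toReal := by
  rw [← setIntegral_openSimplex_prod_mul (φ := iklKernel (2 * u) l)
    (fun _ => measurable_expKernel _ _) fun _ _ => expKernel_nonneg _ _]
  refine integral_congr_ae (.of_forall fun w => ?_)
  have hlast : ¬ n < l - 1 := by omega
  simp only [iklKernel, expKernel_zero_left, hlast, if_false, neg_zero, zero_mul, exp_zero, mul_one,
    ← exp_sum, Finset.sum_filter, Finset.mul_sum]
  congr! 2 with i
  split_ifs <;> ring

theorem prod_range_itklKernel (a : ℝ) {l n : ℕ} (hl : 2 ≤ l) (hln : l ≤ n) (y : ℕ → ℝ) :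
    ∏ i ∈ Finset.range n, itklKernel a l i (y (i + 1))
      = exp (-a * ∑ j ∈ Finset.Icc 2 l, y j) * (1 - exp (-y l)) ^ (-a) * (1 - exp (-y 1)) ^ a := by
  have hpow : ∏ i ∈ Finset.range n,
      (1 - exp (-y (i + 1))) ^ (if i = 0 then a else if i = l - 1 then -a else 0)
        = (1 - exp (-y 1)) ^ a * (1 - exp (-y l)) ^ (-a) := by
    rw [Finset.prod_eq_mul 0 (l - 1) (by omega) ?_ (by simp; omega) (by simp; omega)]
    · have hl₁ : l - 1 ≠ 0 := by omega
      have hl₂ : l - 1 + 1 = l := by omega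
      simp [hl₁, hl₂]
    · rintro i - ⟨hi₀, hi₁⟩
      simp [hi₀, hi₁]
  have hexp : ∑ i ∈ Finset.range n, -(if i ∈ Finset.Ico 1 l then a else 0) * y (i + 1)
      = -a * ∑ j ∈ Finset.Icc 2 l, y j := by
    have hsub : Finset.Ico 1 l ⊆ Finset.range n := fun i hi => by
      simp only [Finset.mem_Ico, Finset.mem_range] at hi ⊢
      omega
    have hshift : ∑ i ∈ Finset.Ico 1 l, y (i + 1) = ∑ j ∈ Finset.Icc 2 l, y j := by
      rw [Finset.sum_Ico_add' y 1 l 1]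
      rfl
    simp only [neg_mul, ite_mul, zero_mul, Finset.sum_neg_distrib, Finset.sum_ite_mem,
      Finset.inter_eq_right.2 hsub, ← Finset.mul_sum, hshift]
  simp only [itklKernel, expKernel, Finset.prod_mul_distrib, ← exp_sum, hpow, hexp]
  ring

theorem Itkl_eq_toReal_iteratedLConvolution {n l : ℕ} (hl : 2 ≤ l) (hln : l ≤ n + 1) (u L : ℝ) :
    Itkl (n + 1) l u L
      = (iteratedLConvolution volume (fun i => halfLineDensity (itklKernel (2 * u) l i)) n
          (L / 2)).toReal := by
  rw [← setIntegral_openSimplex_prod_mul (φ := itklKernel (2 * u) l)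
    (fun _ => measurable_expKernel _ _) fun _ _ => expKernel_nonneg _ _]
  refine integral_congr_ae (.of_forall fun w => ?_)
  simp only
  rw [← prod_range_itklKernel (2 * u) hl hln (wcoord (n + 1) L w), Finset.prod_range_succ,
    Finset.prod_range]
  simp [wcoord]

theorem Itkl_eq_Gamma_mul_Gamma_mul_Ikl {k l : ℕ} (hl : 2 ≤ l) (hlk : l ≤ k) {u : ℝ}
    (hu : |u| < 1 / 2) (L : ℝ) :
    Itkl k l u L = Gamma (1 + 2 * u) * Gamma (1 - 2 * u) * Ikl k l (-u) L := by
  obtain ⟨n, rfl⟩ : ∃ n, k = n + 1 := Nat.exists_eq_add_of_le' (by omega)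
  have ha : |2 * u| < 1 := by rw [abs_mul, abs_two]; linarith
  obtain ⟨ha₁, ha₂⟩ := abs_lt.1 ha
  have hGamma : 0 ≤ Gamma (1 + 2 * u) * Gamma (1 - 2 * u) :=
    mul_nonneg (Gamma_nonneg_of_nonneg (by linarith)) (Gamma_nonneg_of_nonneg (by linarith))
  rw [Itkl_eq_toReal_iteratedLConvolution hl hlk, Ikl_eq_toReal_iteratedLConvolution hlk,
    iteratedLConvolution_itklKernel ha hl hlk, Pi.smul_apply, smul_eq_mul, ENNReal.toReal_mul,
    ENNReal.toReal_ofReal hGamma]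

end SimplexIntegrals

theorem Gamma_one_add_mul_Gamma_one_sub {a : ℝ} (ha : a ≠ 0) :
    Gamma (1 + a) * Gamma (1 - a) = π * a / sin (π * a) := by
  rw [add_comm, Gamma_add_one ha, mul_assoc, Gamma_mul_Gamma_one_sub]
  ring

/-- **Reflection relation (proof of Proposition 5.2).** For `2 ≤ ℓ ≤ k`,
`0 < |u| < 1/2` and `L ≥ 0`: `Ĩ_{k,ℓ}(u,L) = (2πu/sin(2πu)) · I_{k,ℓ}(−u,L)`. -/
theorem stmt_6 (k l : ℕ) (hk : 2 ≤ k) (hl2 : 2 ≤ l) (hlk : l ≤ k)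
    (u L : ℝ) (hu0 : 0 < |u|) (hu : |u| < 1/2) (hL : 0 ≤ L) :
    Itkl k l u L = (2*π*u / Real.sin (2*π*u)) * Ikl k l (-u) L := by
  have hu' : 2 * u ≠ 0 := mul_ne_zero two_ne_zero (abs_pos.1 hu0)
  rw [Itkl_eq_Gamma_mul_Gamma_mul_Ikl hl2 hlk hu, Gamma_one_add_mul_Gamma_one_sub hu',
    mul_left_comm π, ← mul_assoc]
end
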